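/- (Leibniz rule for the classical Riemann–Liouville derivative.) Let 0 < α < 1 and a < b. Suppose f, g : ℝ → ℝ are real-analytic with everywhere-convergent power series. Then for every x ∈ (a,b): (^{RL}D^{α}(f·g))(x) = Σ_{m=0}^∞ binom(α, m) f⁽ᵐ⁾(x) (^{RL}D^{α−m} g)(x), where f⁽ᵐ⁾ is the ordinary m-th derivative of f and the series converges. -/

import Mathlib

open Real

/-- Generalized binomial coefficient `binom(γ, n) = γ(γ-1)⋯(γ-n+1)/n!`. -/
noncomputable def genBinom (γ : ℝ) (n : ℕ) : ℝ :=
  (∏ i ∈ Finset.range n, (γ - (i : ℝ))) / (n.factorial : ℝ)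

/-- Ψ-Riemann–Liouville fractional integral of order `α` with base point `a`;
by convention the order-0 integral is the identity. -/
noncomputable def psiI (a : ℝ) (Ψ f : ℝ → ℝ) (α : ℝ) (x : ℝ) : ℝ :=
  if α = 0 then f x
  else (Real.Gamma α)⁻¹ * ∫ t in a..x, deriv Ψ t * (Ψ x - Ψ t) ^ (α - 1) * f t

/-- Ψ-Riemann–Liouville fractional derivative of order `γ` (for `γ ≤ 0` it is the
fractional integral of order `-γ`, the order-0 case being the identity). -/
noncomputable def psiRLD (a : ℝ) (Ψ f : ℝ → ℝ) (γ : ℝ) (x : ℝ) : ℝ :=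
  if γ ≤ 0 then psiI a Ψ f (-γ) x
  else (deriv Ψ x)⁻¹ * deriv (fun y => psiI a Ψ f (1 - γ) y) x

/-- Ψ-Caputo fractional derivative of order `γ` (for `γ ≤ 0` it is the
fractional integral of order `-γ`). -/
noncomputable def psiCD (a : ℝ) (Ψ f : ℝ → ℝ) (γ : ℝ) (x : ℝ) : ℝ :=
  if γ ≤ 0 then psiI a Ψ f (-γ) x
  else psiI a Ψ (fun t => (deriv Ψ t)⁻¹ * deriv f t) (1 - γ) x

/-- Ψ-Hilfer fractional derivative of order `α` and type `β`. -/
noncomputable def psiHD (a : ℝ) (Ψ f : ℝ → ℝ) (α β : ℝ) (x : ℝ) : ℝ :=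
  psiI a Ψ
    (fun y => (deriv Ψ y)⁻¹ * deriv (fun z => psiI a Ψ f ((1 - β) * (1 - α)) z) y)
    (β * (1 - α)) x

/-- Classical Riemann–Liouville fractional integral with base point `a`. -/
noncomputable def rlI (a : ℝ) (α : ℝ) (f : ℝ → ℝ) (x : ℝ) : ℝ :=
  if α = 0 then f x
  else (Real.Gamma α)⁻¹ * ∫ t in a..x, (x - t) ^ (α - 1) * f t

/-- Classical Riemann–Liouville fractional derivative (fractional integral for `γ ≤ 0`). -/
noncomputable def rlD (a : ℝ) (γ : ℝ) (f : ℝ → ℝ) (x : ℝ) : ℝ :=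
  if γ ≤ 0 then rlI a (-γ) f x
  else deriv (fun y => rlI a (1 - γ) f y) x

/-- Classical Caputo fractional derivative (fractional integral for `γ ≤ 0`). -/
noncomputable def capD (a : ℝ) (γ : ℝ) (f : ℝ → ℝ) (x : ℝ) : ℝ :=
  if γ ≤ 0 then rlI a (-γ) f x
  else rlI a (1 - γ) (deriv f) x

/-- Classical Hilfer fractional derivative of order `α` and type `β`. -/
noncomputable def hilD (a : ℝ) (α β : ℝ) (f : ℝ → ℝ) (x : ℝ) : ℝ :=
  rlI a (β * (1 - α))
    (fun y => deriv (fun z => rlI a ((1 - β) * (1 - α)) f z) y) x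

/-- Hadamard fractional integral with base point `a`. -/
noncomputable def hadI (a : ℝ) (α : ℝ) (f : ℝ → ℝ) (x : ℝ) : ℝ :=
  if α = 0 then f x
  else (Real.Gamma α)⁻¹ * ∫ t in a..x, (Real.log x - Real.log t) ^ (α - 1) * f t / t

/-- Caputo–Hadamard fractional derivative (Hadamard fractional integral for `γ ≤ 0`). -/
noncomputable def chD (a : ℝ) (γ : ℝ) (f : ℝ → ℝ) (x : ℝ) : ℝ :=
  if γ ≤ 0 then hadI a (-γ) f x
  else hadI a (1 - γ) (fun t => t * deriv f t) x

/-- `h` is real-analytic with a power series converging on all of `ℝ`. -/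
def EntireReal (h : ℝ → ℝ) : Prop :=
  ∃ p : FormalMultilinearSeries ℝ ℝ ℝ, HasFPowerSeriesOnBall h p 0 ⊤

/-!
With `F = dslope f x` and `β = 1 - α`, write `f t = f x - (x - t) F t`. The constant contributes
`f x * D^α g x`, and the other part minus the derivative at `y = x` of `I^β ((x - ·) F g) y`.
From `x - t = (y - t) + (x - y)` one gets
`I^β ((x - ·) k) y = β I^(β+1) k y + (x - y) I^β k y`. At `y = x` the first summand has derivative
`β I^β k x` and the second `-I^β k x`, the factor `x - y` making mere continuity of `I^β k` enough.
Hence `D^α (f g) x = f x * D^α g x + α I^β (F g) x`.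
Expanding `F` in its Taylor series at `x` and integrating termwise, the identity
`I^β ((x - ·)^m g) x = Γ(β + m) / Γ(β) * I^(β+m) g x` turns the last term into the rest of the
Leibniz series.
-/

open MeasureTheory Set Filter Topology

lemma integral_integral_triangle_swap {E : Type*} [NormedAddCommGroup E] [NormedSpace ℝ E]
    {a x : ℝ} (hax : a ≤ x) {F : ℝ → ℝ → E}
    (hF : IntegrableOn F.uncurry ({p | p.2 ≤ p.1} ∩ Ioc a x ×ˢ Ioc a x)) :
    ∫ s in a..x, ∫ t in a..s, F s t = ∫ t in a..x, ∫ s in t..x, F s t := by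
  have hmeas : MeasurableSet {p : ℝ × ℝ | p.2 ≤ p.1} :=
    measurableSet_le measurable_snd measurable_fst
  have hswap := integral_integral_swap (f := fun s t ↦ (Iic s).indicator (F s) t)
    (μ := volume.restrict (Ioc a x)) (ν := volume.restrict (Ioc a x)) (by
      rw [Measure.prod_restrict]
      rw [IntegrableOn, ← Measure.restrict_restrict hmeas] at hF
      exact (integrable_indicator_iff hmeas).2 hF)
  rw [intervalIntegral.integral_of_le hax, intervalIntegral.integral_of_le hax]
  calc ∫ s in Ioc a x, ∫ t in a..s, F s t
      = ∫ s in Ioc a x, ∫ t in Ioc a x, (Iic s).indicator (F s) t := by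
        refine setIntegral_congr_fun measurableSet_Ioc fun s hs ↦ ?_
        rw [setIntegral_indicator measurableSet_Iic, Ioc_inter_Iic, min_eq_right hs.2,
          intervalIntegral.integral_of_le hs.1.le]
    _ = ∫ t in Ioc a x, ∫ s in Ioc a x, (Iic s).indicator (F s) t := hswap
    _ = ∫ t in Ioc a x, ∫ s in t..x, F s t := by
        refine setIntegral_congr_fun measurableSet_Ioc fun t ht ↦ ?_
        have hind : ∀ s, (Iic s).indicator (F s) t = (Ici t).indicator (F · t) s := fun s ↦ by
          simp only [indicator_apply, mem_Iic, mem_Ici]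
        have hset : Ioc a x ∩ Ici t = Icc t x := by
          ext s
          simp only [mem_inter_iff, mem_Ioc, mem_Ici, mem_Icc]
          exact ⟨fun h ↦ ⟨h.2, h.1.2⟩, fun h ↦ ⟨⟨ht.1.trans_le h.1, h.2⟩, h.1⟩⟩
        simp only [hind]
        rw [setIntegral_indicator measurableSet_Ici, hset, integral_Icc_eq_integral_Ioc,
          intervalIntegral.integral_of_le ht.2]

lemma hasDerivAt_sub_smul_of_continuousAt {𝕜 E : Type*} [NontriviallyNormedField 𝕜]
    [NormedAddCommGroup E] [NormedSpace 𝕜 E] {x : 𝕜} {J : 𝕜 → E} (hJ : ContinuousAt J x) :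
    HasDerivAt (fun y ↦ (x - y) • J y) (-J x) x := by
  rw [hasDerivAt_iff_tendsto_slope]
  refine (hJ.neg.tendsto.mono_left nhdsWithin_le_nhds).congr' ?_
  filter_upwards [self_mem_nhdsWithin] with y hy
  rw [slope_def_module, sub_self, zero_smul, sub_zero, smul_smul, ← neg_sub y x, mul_neg,
    inv_mul_cancel₀ (sub_ne_zero.2 hy), neg_one_smul, Pi.neg_apply]

section FractionalIntegral

variable {a b x y β : ℝ} {g h k : ℝ → ℝ}

lemma rlI_of_pos (hβ : 0 < β) :
    rlI a β h y = (Gamma β)⁻¹ * ∫ t in a..y, (y - t) ^ (β - 1) * h t :=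
  if_neg hβ.ne'

lemma intervalIntegrable_sub_rpow (hβ : 0 < β) :
    IntervalIntegrable (fun t ↦ (y - t) ^ (β - 1)) volume a y := by
  simpa using (intervalIntegral.intervalIntegrable_rpow' (a := y - a) (b := 0) (r := β - 1)
    (by linarith)).comp_sub_left y

lemma intervalIntegrable_sub_rpow_mul (hβ : 0 < β) (hh : ContinuousOn h (uIcc a y)) :
    IntervalIntegrable (fun t ↦ (y - t) ^ (β - 1) * h t) volume a y :=
  (intervalIntegrable_sub_rpow hβ).mul_continuousOn hh

lemma rlI_const_mul (a β c : ℝ) (h : ℝ → ℝ) (y : ℝ) :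
    rlI a β (fun t ↦ c * h t) y = c * rlI a β h y := by
  unfold rlI
  split_ifs
  · rfl
  · simp only [mul_left_comm _ c, intervalIntegral.integral_const_mul]

lemma rlI_add (hβ : 0 < β) (hh : ContinuousOn h (uIcc a y)) (hk : ContinuousOn k (uIcc a y)) :
    rlI a β (fun t ↦ h t + k t) y = rlI a β h y + rlI a β k y := by
  simp only [rlI_of_pos hβ, mul_add]
  rw [intervalIntegral.integral_add (intervalIntegrable_sub_rpow_mul hβ hh)
    (intervalIntegrable_sub_rpow_mul hβ hk), mul_add]

lemma rlI_eq_rpow_mul_integral_unitInterval (hβ : 0 < β) (hay : a ≤ y) :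
    rlI a β h y = (Gamma β)⁻¹ *
      ((y - a) ^ β * ∫ s in (0 : ℝ)..1, (1 - s) ^ (β - 1) * h (a + (y - a) * s)) := by
  have hsubst := intervalIntegral.mul_integral_comp_add_mul (a := 0) (b := 1)
    (f := fun t ↦ (y - t) ^ (β - 1) * h t) (y - a) a
  simp only [mul_zero, mul_one, add_zero, add_sub_cancel] at hsubst
  have hpow : (y - a) ^ β = (y - a) * (y - a) ^ (β - 1) := by
    rw [← rpow_one_add' (sub_nonneg.2 hay) (by linarith), add_sub_cancel]
  rw [rlI_of_pos hβ, ← hsubst, hpow, mul_assoc (y - a),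
    ← intervalIntegral.integral_const_mul ((y - a) ^ (β - 1))]
  congr 2
  refine intervalIntegral.integral_congr fun s hs ↦ ?_
  rw [uIcc_of_le zero_le_one] at hs
  rw [← mul_assoc, ← mul_rpow (sub_nonneg.2 hay) (sub_nonneg.2 hs.2)]
  ring_nf

lemma continuousOn_rlI (hβ : 0 < β) (hh : ContinuousOn h (Icc a b)) :
    ContinuousOn (rlI a β h) (Icc a b) := by
  obtain ⟨C, hC⟩ := isCompact_Icc.exists_bound_of_continuousOn hh
  have hmem : ∀ y ∈ Icc a b, ∀ s ∈ Icc (0 : ℝ) 1, a + (y - a) * s ∈ Icc a b := fun y hy s hs ↦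
    ⟨by nlinarith [hy.1, hs.1], by nlinarith [hy.1, hy.2, hs.2]⟩
  have hker : IntervalIntegrable (fun s : ℝ ↦ (1 - s) ^ (β - 1)) volume 0 1 :=
    intervalIntegrable_sub_rpow hβ
  have hcomp : ∀ y ∈ Icc a b, ContinuousOn (fun s ↦ h (a + (y - a) * s)) (uIcc 0 1) :=
    fun y hy ↦ hh.comp (by fun_prop) fun s hs ↦ hmem y hy s (by rwa [uIcc_of_le zero_le_one] at hs)
  have hint : ContinuousOn
      (fun y ↦ ∫ s in (0 : ℝ)..1, (1 - s) ^ (β - 1) * h (a + (y - a) * s)) (Icc a b) := by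
    intro y₀ hy₀
    refine intervalIntegral.continuousWithinAt_of_dominated_interval
      (bound := fun s ↦ ‖(1 - s) ^ (β - 1)‖ * C) ?_ ?_ (hker.norm.mul_const C) ?_
    · filter_upwards [self_mem_nhdsWithin] with y hy
      exact (hker.mul_continuousOn (hcomp y hy)).def'.1
    · filter_upwards [self_mem_nhdsWithin] with y hy
      refine Eventually.of_forall fun s hs ↦ ?_
      rw [uIoc_of_le zero_le_one] at hs
      rw [norm_mul]
      exact mul_le_mul_of_nonneg_left (hC _ (hmem y hy s (Ioc_subset_Icc_self hs))) (norm_nonneg _)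
    · refine Eventually.of_forall fun s hs ↦ continuousWithinAt_const.mul ?_
      rw [uIoc_of_le zero_le_one] at hs
      exact (hh.comp (by fun_prop) fun y hy ↦ hmem y hy s (Ioc_subset_Icc_self hs)) y₀ hy₀
  have hpow : ContinuousOn (fun y ↦ (y - a) ^ β) (Icc a b) :=
    ContinuousOn.rpow_const (by fun_prop) fun _ _ ↦ Or.inr hβ.le
  exact (continuousOn_const.mul (hpow.mul hint)).congr fun y hy ↦
    rlI_eq_rpow_mul_integral_unitInterval hβ hy.1

lemma integrableOn_sub_rpow_mul_triangle (hβ : 0 < β) (hax : a ≤ x)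
    (hh : IntervalIntegrable h volume a x) :
    IntegrableOn (Function.uncurry fun s t ↦ (s - t) ^ (β - 1) * h t)
      ({p | p.2 ≤ p.1} ∩ Ioc a x ×ˢ Ioc a x) := by
  have hker : Integrable ((Icc 0 (x - a)).indicator fun u : ℝ ↦ u ^ (β - 1)) := by
    rw [integrable_indicator_iff measurableSet_Icc, ← intervalIntegrable_iff_integrableOn_Icc_of_le
      (sub_nonneg.2 hax)]
    exact intervalIntegral.intervalIntegrable_rpow' (by linarith)
  have hconv : IntegrableOn
      (fun p : ℝ × ℝ ↦ (Icc 0 (x - a)).indicator (· ^ (β - 1)) (p.1 - p.2) * h p.2)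
      (univ ×ˢ Ioc a x) := by
    rw [IntegrableOn, Measure.volume_eq_prod, ← Measure.prod_restrict, Measure.restrict_univ]
    exact hh.1.convolution_integrand (ContinuousLinearMap.mul ℝ ℝ).flip hker
  have hmeas : MeasurableSet ({p : ℝ × ℝ | p.2 ≤ p.1} ∩ Ioc a x ×ˢ Ioc a x) :=
    (measurableSet_le measurable_snd measurable_fst).inter
      (measurableSet_Ioc.prod measurableSet_Ioc)
  refine (hconv.mono_set fun p hp ↦ ⟨trivial, hp.2.2⟩).congr_fun (fun p hp ↦ ?_) hmeas
  have hmem : p.1 - p.2 ∈ Icc 0 (x - a) :=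
    ⟨sub_nonneg.2 hp.1, by linarith [hp.2.1.2, hp.2.2.1]⟩
  simp [indicator_of_mem hmem, Function.uncurry]

lemma integral_rlI (hβ : 0 < β) (hax : a ≤ x) (hh : IntervalIntegrable h volume a x) :
    ∫ s in a..x, rlI a β h s = rlI a (β + 1) h x := by
  simp only [rlI_of_pos hβ, rlI_of_pos (add_pos hβ one_pos), intervalIntegral.integral_const_mul]
  rw [integral_integral_triangle_swap hax (integrableOn_sub_rpow_mul_triangle hβ hax hh),
    Gamma_add_one hβ.ne', mul_inv_rev, mul_assoc,
    ← intervalIntegral.integral_const_mul β⁻¹]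
  congr 1
  refine intervalIntegral.integral_congr fun t _ ↦ ?_
  rw [intervalIntegral.integral_mul_const,
    intervalIntegral.integral_comp_sub_right (fun u ↦ u ^ (β - 1)), sub_self,
    integral_rpow (Or.inl (by linarith)), sub_add_cancel, zero_rpow hβ.ne', add_sub_cancel_right]
  ring

lemma hasDerivAt_rlI_add_one (hβ : 0 < β) (hx : x ∈ Ioo a b) (hh : ContinuousOn h (Icc a b)) :
    HasDerivAt (rlI a (β + 1) h) (rlI a β h x) x := by
  have hcont := continuousOn_rlI hβ hh
  have hnhds : Icc a b ∈ 𝓝 x := Icc_mem_nhds hx.1 hx.2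
  have hsub : ∀ y ∈ Icc a b, uIcc a y ⊆ Icc a b := fun y hy ↦ by
    rw [uIcc_of_le hy.1]
    exact Icc_subset_Icc_right hy.2
  have hFTC := intervalIntegral.integral_hasDerivAt_right
    (hcont.mono (hsub x (Ioo_subset_Icc_self hx))).intervalIntegrable
    (hcont.stronglyMeasurableAtFilter_nhdsWithin measurableSet_Icc x |>.filter_mono
      (le_inf le_rfl (le_principal_iff.2 hnhds))) (hcont.continuousAt hnhds)
  refine hFTC.congr_of_eventuallyEq ?_
  filter_upwards [hnhds] with y hy
  exact (integral_rlI hβ hy.1 (hh.mono (hsub y hy)).intervalIntegrable).symm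

lemma rlI_eq_add_rlI_deriv {g' : ℝ → ℝ} (hβ : 0 < β) (hay : a ≤ y)
    (hg : ∀ t ∈ Icc a y, HasDerivAt g (g' t) t) (hg' : ContinuousOn g' (Icc a y)) :
    rlI a β g y = g a * (y - a) ^ β / Gamma (β + 1) + rlI a (β + 1) g' y := by
  rw [← uIcc_of_le hay] at hg hg'
  have hpow : ∀ t ∈ Ioo (min a y) (max a y),
      HasDerivAt (fun t ↦ -(y - t) ^ β / β) ((y - t) ^ (β - 1)) t := by
    intro t ht
    rw [min_eq_left hay, max_eq_right hay] at ht
    have := (((hasDerivAt_id t).const_sub y).rpow_const (p := β)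
      (Or.inl (sub_pos.2 ht.2).ne')).neg.div_const β
    refine this.congr_deriv ?_
    simp only [id]
    field_simp
  have hparts := intervalIntegral.integral_mul_deriv_eq_deriv_mul_of_hasDerivAt
    (fun t ht ↦ (hg t ht).continuousAt.continuousWithinAt)
    ((ContinuousOn.rpow_const (by fun_prop) fun _ _ ↦ Or.inr hβ.le).neg.div_const β)
    (fun t ht ↦ hg t (Ioo_subset_Icc_self ht)) hpow hg'.intervalIntegrable
    (intervalIntegrable_sub_rpow hβ)
  have hint : ∫ t in a..y, g' t * (-(y - t) ^ β / β) = -β⁻¹ * ∫ t in a..y, (y - t) ^ β * g' t := by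
    rw [← intervalIntegral.integral_const_mul]
    congr 1 with t
    ring
  simp only [mul_comm (g _), Pi.neg_apply] at hparts
  rw [rlI_of_pos hβ, rlI_of_pos (add_pos hβ one_pos), hparts, hint, Gamma_add_one hβ.ne',
    sub_self, zero_rpow hβ.ne', add_sub_cancel_right]
  have := (Gamma_pos_of_pos hβ).ne'
  field_simp
  ring

lemma differentiableAt_rlI {g' : ℝ → ℝ} (hβ : 0 < β) (hx : x ∈ Ioo a b)
    (hg : ∀ t ∈ Icc a b, HasDerivAt g (g' t) t) (hg' : ContinuousOn g' (Icc a b)) :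
    DifferentiableAt ℝ (rlI a β g) x := by
  have hpow : DifferentiableAt ℝ (fun y ↦ g a * (y - a) ^ β / Gamma (β + 1)) x :=
    ((((differentiableAt_id.sub_const a).rpow_const (Or.inl (sub_pos.2 hx.1).ne')).const_mul
      (g a)).div_const _)
  refine (hpow.add (hasDerivAt_rlI_add_one hβ hx hg').differentiableAt).congr_of_eventuallyEq ?_
  filter_upwards [Icc_mem_nhds hx.1 hx.2] with y hy
  have hsub : Icc a y ⊆ Icc a b := Icc_subset_Icc_right hy.2
  exact rlI_eq_add_rlI_deriv hβ hy.1 (fun t ht ↦ hg t (hsub ht)) (hg'.mono hsub)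

lemma rlI_sub_mul (hβ : 0 < β) (hay : a ≤ y) (hk : ContinuousOn k (Icc a y)) (x : ℝ) :
    rlI a β (fun t ↦ (x - t) * k t) y = β * rlI a (β + 1) k y + (x - y) * rlI a β k y := by
  rw [← uIcc_of_le hay] at hk
  have hker : rlI a β (fun t ↦ (y - t) * k t) y = β * rlI a (β + 1) k y := by
    have hint : ∫ t in a..y, (y - t) ^ (β - 1) * ((y - t) * k t)
        = ∫ t in a..y, (y - t) ^ β * k t := by
      refine intervalIntegral.integral_congr fun t ht ↦ ?_
      rw [uIcc_of_le hay] at ht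
      have hpow := rpow_add_one' (sub_nonneg.2 ht.2) (y := β - 1) (by linarith)
      rw [sub_add_cancel] at hpow
      rw [hpow, mul_assoc]
    rw [rlI_of_pos hβ, rlI_of_pos (add_pos hβ one_pos), hint, Gamma_add_one hβ.ne',
      add_sub_cancel_right]
    field_simp
  have hsplit : (fun t ↦ (x - t) * k t) = fun t ↦ (y - t) * k t + (x - y) * k t := by
    ext t
    ring
  rw [hsplit, rlI_add hβ (by fun_prop) (by fun_prop), hker, rlI_const_mul]

lemma rlI_sub_pow_mul (hβ : 0 < β) (hax : a ≤ x) (hg : ContinuousOn g (Icc a x)) (m : ℕ) :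
    rlI a β (fun t ↦ (x - t) ^ m * g t) x = Gamma (β + m) / Gamma β * rlI a (β + m) g x := by
  induction m generalizing β with
  | zero => simp [(Gamma_pos_of_pos hβ).ne']
  | succ m ih =>
    simp only [pow_succ', mul_assoc]
    rw [rlI_sub_mul hβ hax (by fun_prop), sub_self, zero_mul, add_zero, ih (add_pos hβ one_pos),
      Gamma_add_one hβ.ne', Nat.cast_succ, add_assoc β 1, add_comm 1 (m : ℝ)]
    field_simp

lemma hasDerivAt_rlI_sub_mul (hβ : 0 < β) (hx : x ∈ Ioo a b) (hk : ContinuousOn k (Icc a b)) :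
    HasDerivAt (rlI a β fun t ↦ (x - t) * k t) ((β - 1) * rlI a β k x) x := by
  have hnhds : Icc a b ∈ 𝓝 x := Icc_mem_nhds hx.1 hx.2
  have hsum := ((hasDerivAt_rlI_add_one hβ hx hk).const_mul β).add
    (hasDerivAt_sub_smul_of_continuousAt ((continuousOn_rlI hβ hk).continuousAt hnhds))
  refine (hsum.congr_deriv (by ring)).congr_of_eventuallyEq ?_
  filter_upwards [hnhds] with y hy
  exact rlI_sub_mul hβ hy.1 (hk.mono (Icc_subset_Icc_right hy.2)) x

lemma hasSum_rlI {ι : Type*} [Countable ι] {F : ι → ℝ → ℝ} {G : ℝ → ℝ} {u : ι → ℝ} (hβ : 0 < β)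
    (hax : a ≤ x) (hF : ∀ i, ContinuousOn (F i) (Icc a x)) (hu : Summable u)
    (hFu : ∀ i, ∀ t ∈ Icc a x, ‖F i t‖ ≤ u i) (hG : ∀ t ∈ Icc a x, HasSum (F · t) (G t)) :
    HasSum (fun i ↦ rlI a β (F i) x) (rlI a β G x) := by
  have hIcc : ∀ t ∈ uIoc a x, t ∈ Icc a x := fun t ht ↦ by
    rw [uIoc_of_le hax] at ht
    exact Ioc_subset_Icc_self ht
  have hsum := intervalIntegral.hasSum_integral_of_dominated_convergence (μ := volume)
    (F := fun i t ↦ (x - t) ^ (β - 1) * F i t) (f := fun t ↦ (x - t) ^ (β - 1) * G t)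
    (fun i t ↦ ‖(x - t) ^ (β - 1)‖ * u i) (a := a) (b := x)
    (fun i ↦ (intervalIntegrable_sub_rpow_mul hβ (uIcc_of_le hax ▸ hF i)).def'.1)
    (fun i ↦ Eventually.of_forall fun t ht ↦ by
      rw [norm_mul]
      exact mul_le_mul_of_nonneg_left (hFu i t (hIcc t ht)) (norm_nonneg _))
    (Eventually.of_forall fun t _ ↦ hu.mul_left _)
    (by simpa only [tsum_mul_left] using (intervalIntegrable_sub_rpow hβ).norm.mul_const _)
    (Eventually.of_forall fun t ht ↦ (hG t (hIcc t ht)).mul_left _)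
  simpa only [rlI_of_pos hβ] using hsum.mul_left (Gamma β)⁻¹

end FractionalIntegral

lemma rlD_of_pos {a γ : ℝ} (hγ : 0 < γ) (f : ℝ → ℝ) (x : ℝ) :
    rlD a γ f x = deriv (rlI a (1 - γ) f) x :=
  if_neg hγ.not_ge

lemma rlD_of_nonpos {a γ : ℝ} (hγ : γ ≤ 0) (f : ℝ → ℝ) (x : ℝ) :
    rlD a γ f x = rlI a (-γ) f x :=
  if_pos hγ

lemma rlD_mul {a b α x : ℝ} {f g : ℝ → ℝ} (hα0 : 0 < α) (hα1 : α < 1) (hx : x ∈ Ioo a b)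
    (hf : ContinuousOn f (Icc a b)) (hfx : DifferentiableAt ℝ f x) (hg : ContinuousOn g (Icc a b))
    (hgx : DifferentiableAt ℝ (rlI a (1 - α) g) x) :
    rlD a α (fun t ↦ f t * g t) x
      = f x * rlD a α g x + α * rlI a (1 - α) (fun t ↦ dslope f x t * g t) x := by
  have hβ : 0 < 1 - α := sub_pos.2 hα1
  have hnhds : Icc a b ∈ 𝓝 x := Icc_mem_nhds hx.1 hx.2
  have hk : ContinuousOn (fun t ↦ dslope f x t * g t) (Icc a b) :=
    ((continuousOn_dslope hnhds).2 ⟨hf, hfx⟩).mul hg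
  have hsplit : (fun t ↦ f t * g t)
      = fun t ↦ f x * g t + -1 * ((x - t) * (dslope f x t * g t)) := by
    ext t
    have := sub_smul_dslope f x t
    rw [smul_eq_mul] at this
    linear_combination -g t * this
  have hderiv := (hgx.hasDerivAt.const_mul (f x)).add
    ((hasDerivAt_rlI_sub_mul hβ hx hk).const_mul (-1))
  rw [rlD_of_pos hα0, rlD_of_pos hα0, hsplit]
  refine (hderiv.congr_of_eventuallyEq ?_).deriv.trans (by ring)
  filter_upwards [hnhds] with y hy
  have hsub : uIcc a y ⊆ Icc a b := by
    rw [uIcc_of_le hy.1]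
    exact Icc_subset_Icc_right hy.2
  have hgy := hg.mono hsub
  have hky := hk.mono hsub
  rw [rlI_add hβ (by fun_prop) (by fun_prop), rlI_const_mul, rlI_const_mul]
  rfl

lemma genBinom_succ_eq_Gamma {α : ℝ} (hα : α < 1) (m : ℕ) :
    genBinom α (m + 1)
      = α * ((-1) ^ m / (m + 1).factorial * (Gamma (1 - α + m) / Gamma (1 - α))) := by
  have hΓ : Gamma (1 - α) ≠ 0 := (Gamma_pos_of_pos (sub_pos.2 hα)).ne'
  have hprod : (∏ i ∈ Finset.range (m + 1), (α - (i : ℝ))) * Gamma (1 - α)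
      = (-1) ^ m * α * Gamma (1 - α + m) := by
    induction m with
    | zero => simp
    | succ m ih =>
      have hne : 1 - α + m ≠ 0 := by linarith [m.cast_nonneg (α := ℝ)]
      rw [Finset.prod_range_succ, Nat.cast_succ, ← add_assoc, Gamma_add_one hne]
      linear_combination (α - (m + 1)) * ih
  unfold genBinom
  field_simp
  linear_combination hprod

lemma hasSum_dslope_of_hasFPowerSeriesOnBall {𝕜 : Type*} [NontriviallyNormedField 𝕜]
    [CompleteSpace 𝕜] [CharZero 𝕜] {f : 𝕜 → 𝕜} {p : FormalMultilinearSeries 𝕜 𝕜 𝕜} {x t : 𝕜}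
    {r : ENNReal} (hf : HasFPowerSeriesOnBall f p x r) (ht : t ∈ Metric.eball x r) :
    HasSum (fun m : ℕ ↦ iteratedDeriv (m + 1) f x / (m + 1).factorial * (t - x) ^ m)
      (dslope f x t) := by
  rcases eq_or_ne t x with rfl | hne
  · have := HasSum.hasSum_at_zero (𝕜 := 𝕜)
      fun m : ℕ ↦ iteratedDeriv (m + 1) f t / (m + 1).factorial
    simpa [mul_comm] using this
  · have htaylor : HasSum (fun m : ℕ ↦ iteratedDeriv m f x / m.factorial * (t - x) ^ m) (f t) := by
      have := hf.hasSum_iteratedFDeriv (y := t - x) (by simpa [edist_eq_enorm_sub] using ht)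
      simpa [iteratedFDeriv_apply_eq_iteratedDeriv_mul_prod, div_eq_inv_mul, mul_assoc,
        mul_comm, mul_left_comm] using this
    have hshift := ((hasSum_nat_add_iff' 1).2 htaylor).div_const (t - x)
    have : t - x ≠ 0 := sub_ne_zero.2 hne
    rw [dslope_of_ne _ hne, slope_def_field]
    simpa [pow_succ, ← mul_assoc, mul_div_cancel_right₀ _ this] using hshift

lemma mem_eball_of_dist_le {X : Type*} [PseudoMetricSpace X] {a t x : X} {r : ENNReal}
    (ha : a ∈ Metric.eball x r) (ht : dist t x ≤ dist a x) : t ∈ Metric.eball x r := by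
  rw [Metric.mem_eball, edist_dist] at ha ⊢
  exact (ENNReal.ofReal_le_ofReal ht).trans_lt ha

lemma hasSum_rlI_dslope_mul {a β x : ℝ} {f g : ℝ → ℝ} {p : FormalMultilinearSeries ℝ ℝ ℝ}
    {r : ENNReal} (hβ : 0 < β) (hax : a ≤ x) (hf : HasFPowerSeriesOnBall f p x r)
    (ha : a ∈ Metric.eball x r) (hg : ContinuousOn g (Icc a x)) :
    HasSum (fun m : ℕ ↦ (-1) ^ m / (m + 1).factorial * (Gamma (β + m) / Gamma β)
        * iteratedDeriv (m + 1) f x * rlI a (β + m) g x)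
      (rlI a β (fun t ↦ dslope f x t * g t) x) := by
  set c : ℕ → ℝ := fun m ↦ iteratedDeriv (m + 1) f x / (m + 1).factorial
  obtain ⟨C, hC⟩ := isCompact_Icc.exists_bound_of_continuousOn hg
  have hdist : ∀ t ∈ Icc a x, dist t x ≤ dist a x := fun t ht ↦ by
    rw [Real.dist_eq, Real.dist_eq, abs_sub_comm t, abs_sub_comm a,
      abs_of_nonneg (sub_nonneg.2 ht.2), abs_of_nonneg (sub_nonneg.2 hax)]
    exact sub_le_sub_left ht.1 x
  have hsummable : Summable fun m ↦ ‖c m * (a - x) ^ m‖ :=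
    (hasSum_dslope_of_hasFPowerSeriesOnBall hf ha).summable.norm
  have hsum := hasSum_rlI (F := fun m t ↦ c m * (t - x) ^ m * g t) hβ hax (fun m ↦ by fun_prop)
    (hsummable.mul_right C)
    (fun m t ht ↦ by
      rw [norm_mul, norm_mul, norm_mul, norm_pow, norm_pow]
      gcongr
      exacts [hdist t ht, hC t ht])
    (fun t ht ↦ (hasSum_dslope_of_hasFPowerSeriesOnBall hf
      (mem_eball_of_dist_le ha (hdist t ht))).mul_right (g t))
  convert hsum using 2 with m
  have hfactor : (fun t ↦ c m * (t - x) ^ m * g t)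
      = fun t ↦ (-1) ^ m * c m * ((x - t) ^ m * g t) := by
    ext t
    rw [← neg_sub x t, neg_pow]
    ring
  rw [hfactor, rlI_const_mul, rlI_sub_pow_mul hβ hax hg]
  ring

theorem leibniz_classical_RL_general {a b α x : ℝ} {f g : ℝ → ℝ}
    {p : FormalMultilinearSeries ℝ ℝ ℝ} {r : ENNReal} (hα0 : 0 < α) (hα1 : α < 1)
    (hx : x ∈ Ioo a b) (hf : HasFPowerSeriesOnBall f p x r) (ha : a ∈ Metric.eball x r)
    (hg : ContinuousOn g (Icc a b)) (hgx : DifferentiableAt ℝ (rlI a (1 - α) g) x) :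
    HasSum (fun m : ℕ ↦ genBinom α m * iteratedDeriv m f x * rlD a (α - m) g x)
      (rlD a α (fun t ↦ f t * g t) x) := by
  have hβ : 0 < 1 - α := sub_pos.2 hα1
  obtain ⟨c, hxc, hcb, hc⟩ : ∃ c, x < c ∧ c ≤ b ∧ c ≤ x + (x - a) :=
    ⟨min b (x + (x - a)), lt_min hx.2 (by linarith [hx.1]), min_le_left _ _, min_le_right _ _⟩
  have hball : Icc a c ⊆ Metric.eball x r := fun t ht ↦ mem_eball_of_dist_le ha <| by
    rw [Real.dist_eq, Real.dist_eq, abs_sub_comm a, abs_of_pos (sub_pos.2 hx.1), abs_le]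
    constructor <;> linarith [ht.1, ht.2]
  have hzero : genBinom α 0 * iteratedDeriv 0 f x * rlD a (α - (0 : ℕ)) g x
      = f x * rlD a α g x := by
    simp [genBinom]
  have hsucc : ∀ m : ℕ, genBinom α (m + 1) * iteratedDeriv (m + 1) f x
        * rlD a (α - (m + 1 : ℕ)) g x
      = α * ((-1) ^ m / (m + 1).factorial * (Gamma (1 - α + m) / Gamma (1 - α))
        * iteratedDeriv (m + 1) f x * rlI a (1 - α + m) g x) := fun m ↦ by
    rw [rlD_of_nonpos (by push_cast; linarith [m.cast_nonneg (α := ℝ)]),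
      genBinom_succ_eq_Gamma hα1, show -(α - (m + 1 : ℕ)) = 1 - α + m by push_cast; ring]
    ring
  rw [← hasSum_nat_add_iff' 1, Finset.sum_range_one, hzero,
    rlD_mul hα0 hα1 ⟨hx.1, hxc⟩ (hf.continuousOn.mono hball) hf.analyticAt.differentiableAt
      (hg.mono (Icc_subset_Icc_right hcb)) hgx, add_sub_cancel_left]
  simpa only [hsucc] using (hasSum_rlI_dslope_mul hβ hx.1.le hf ha
    (hg.mono (Icc_subset_Icc_right hx.2.le))).mul_left α

namespace EntireReal

variable {f : ℝ → ℝ}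

lemma exists_hasFPowerSeriesOnBall (hf : EntireReal f) (x : ℝ) :
    ∃ p : FormalMultilinearSeries ℝ ℝ ℝ, HasFPowerSeriesOnBall f p x ⊤ := by
  obtain ⟨p, hp⟩ := hf
  exact ⟨_, by simpa using hp.changeOrigin (y := x) (by simp)⟩

lemma contDiff (hf : EntireReal f) {n : WithTop ℕ∞} : ContDiff ℝ n f := by
  obtain ⟨p, hp⟩ := hf
  have := hp.analyticOnNhd
  rw [Metric.eball_top] at this
  exact this.contDiff

end EntireReal

/-- Leibniz rule for the classical Riemann–Liouville fractional derivative. -/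
theorem leibniz_classical_RL
    (a b : ℝ) (hab : a < b) (α : ℝ) (hα0 : 0 < α) (hα1 : α < 1)
    (f g : ℝ → ℝ) (hf : EntireReal f) (hg : EntireReal g)
    (x : ℝ) (hx : x ∈ Set.Ioo a b) :
    HasSum
      (fun m : ℕ => genBinom α m * iteratedDeriv m f x * rlD a (α - m) g x)
      (rlD a α (fun t => f t * g t) x) := by
  obtain ⟨p, hp⟩ := hf.exists_hasFPowerSeriesOnBall x
  have hg1 : ContDiff ℝ 1 g := hg.contDiff
  have hgx : DifferentiableAt ℝ (rlI a (1 - α) g) x :=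
    differentiableAt_rlI (sub_pos.2 hα1) hx
      (fun t _ ↦ (hg1.differentiable one_ne_zero t).hasDerivAt)
      (hg1.continuous_deriv le_rfl).continuousOn
  exact leibniz_classical_RL_general hα0 hα1 hx hp (by simp) hg1.continuous.continuousOn hgx
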